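/- Assume 1 − (d−1)ν − (K−1)dμ_B > 0. Then for any K distinct block indices l_1,…,l_K, the m×Kd matrix [A_{l_1} … A_{l_K}] obtained by concatenating the corresponding blocks has linearly independent columns. -/

import Mathlib

/- Setting: a measurement matrix `A ∈ ℝ^{m×n}` with `n = L·d`, partitioned into `L` column
blocks of size `m×d`; columns are indexed by pairs `(l, j)` (block `l`, position `j`). -/

noncomputable section

open Finset Matrix

/-- Euclidean (ℓ₂) norm of a finitely indexed real vector. -/
def e2norm {ι : Type*} [Fintype ι] (v : ι → ℝ) : ℝ := Real.sqrt (∑ i, v i ^ 2)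

/-- Euclidean inner (dot) product of two real vectors. -/
def dotp {ι : Type*} [Fintype ι] (u v : ι → ℝ) : ℝ := ∑ i, u i * v i

/-- The `(l, j)` column of the block matrix `A` (block `l`, position `j` inside the block). -/
def acol {m L d : ℕ} (A : Matrix (Fin m) (Fin L × Fin d) ℝ) (l : Fin L) (j : Fin d) :
    Fin m → ℝ :=
  fun i => A i (l, j)

/-- `A_lᵀ v` : correlation of the `l`-th block of `A` with a vector `v ∈ ℝ^m`. -/
def blkT {m L d : ℕ} (A : Matrix (Fin m) (Fin L × Fin d) ℝ) (l : Fin L) (v : Fin m → ℝ) :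
    Fin d → ℝ :=
  fun j => dotp (acol A l j) v

/-- Spectral norm (largest singular value) `ρ(X)` of a real matrix, as the supremum of
`‖Xu‖₂ / ‖u‖₂` over nonzero `u`. -/
def specNorm {p q : ℕ} (X : Matrix (Fin p) (Fin q) ℝ) : ℝ :=
  ⨆ u : {u : Fin q → ℝ // u ≠ 0}, e2norm (X *ᵥ u.1) / e2norm u.1

/-- The `d × d` cross-Gram matrix `A_iᵀ A_j` of two blocks of `A`. -/
def bgram {m L d : ℕ} (A : Matrix (Fin m) (Fin L × Fin d) ℝ) (i j : Fin L) :
    Matrix (Fin d) (Fin d) ℝ :=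
  fun a b => dotp (acol A i a) (acol A j b)

/-- Block-coherence `μ_B = max_{i ≠ j} (1/d) ρ(A_iᵀ A_j)`. -/
def blockCoh {m L d : ℕ} (A : Matrix (Fin m) (Fin L × Fin d) ℝ) : ℝ :=
  ⨆ p : {p : Fin L × Fin L // p.1 ≠ p.2},
    (1 / (d : ℝ)) * specNorm (bgram A p.1.1 p.1.2)

/-- Sub-coherence `ν`: the maximum of `|a_iᵀ a_j|` over pairs of distinct columns lying in the
same block of `A`. -/
def subCoh {m L d : ℕ} (A : Matrix (Fin m) (Fin L × Fin d) ℝ) : ℝ :=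
  ⨆ t : {t : Fin L × Fin d × Fin d // t.2.1 ≠ t.2.2},
    |dotp (acol A t.1.1 t.1.2.1) (acol A t.1.1 t.1.2.2)|

lemma e2norm_nonneg' {ι : Type*} [Fintype ι] (v : ι → ℝ) : 0 ≤ e2norm v := Real.sqrt_nonneg _

lemma e2norm_sq' {ι : Type*} [Fintype ι] (v : ι → ℝ) : e2norm v ^ 2 = ∑ i, v i ^ 2 :=
  Real.sq_sqrt (Finset.sum_nonneg fun _ _ => sq_nonneg _)

lemma abs_dotp_le {ι : Type*} [Fintype ι] (u v : ι → ℝ) : |dotp u v| ≤ e2norm u * e2norm v := by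
  apply abs_le_of_sq_le_sq _ (mul_nonneg (e2norm_nonneg' u) (e2norm_nonneg' v))
  rw [mul_pow, e2norm_sq', e2norm_sq']
  exact Finset.sum_mul_sq_le_sq_mul_sq _ _ _

lemma e2norm_zero' {ι : Type*} [Fintype ι] (v : ι → ℝ) (h : e2norm v = 0) : v = 0 := by
  have h2 := e2norm_sq' v
  rw [h] at h2
  have h3 := (Finset.sum_eq_zero_iff_of_nonneg (fun i _ => sq_nonneg (v i))).1
    (by simpa using h2.symm)
  funext i
  simpa using h3 i (Finset.mem_univ i)

lemma specNorm_nonneg {p q : ℕ} (X : Matrix (Fin p) (Fin q) ℝ) : 0 ≤ specNorm X :=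
  Real.iSup_nonneg fun _ => div_nonneg (e2norm_nonneg' _) (e2norm_nonneg' _)

lemma specNorm_le {p q : ℕ} (X : Matrix (Fin p) (Fin q) ℝ) (u : Fin q → ℝ) :
    e2norm (X *ᵥ u) ≤ specNorm X * e2norm u := by
  have key : ∀ u : Fin q → ℝ,
      e2norm (X *ᵥ u) ≤ Real.sqrt (∑ i, ∑ j, X i j ^ 2) * e2norm u := by
    intro u
    have h0 : 0 ≤ ∑ i, ∑ j, X i j ^ 2 :=
      Finset.sum_nonneg fun _ _ => Finset.sum_nonneg fun _ _ => sq_nonneg _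
    refine le_of_abs_le (abs_le_of_sq_le_sq ?_ (mul_nonneg (Real.sqrt_nonneg _) (e2norm_nonneg' u)))
    rw [mul_pow, e2norm_sq', e2norm_sq', Real.sq_sqrt h0, Finset.sum_mul]
    exact Finset.sum_le_sum fun i _ => Finset.sum_mul_sq_le_sq_mul_sq Finset.univ (X i) u
  by_cases hu : u = 0
  · subst hu
    simp [e2norm]
  · have hpos : 0 < e2norm u :=
      lt_of_le_of_ne (e2norm_nonneg' u) fun h => hu (e2norm_zero' u h.symm)
    rw [← div_le_iff₀ hpos]
    have hb : BddAbove (Set.range fun u : {u : Fin q → ℝ // u ≠ 0} =>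
        e2norm (X *ᵥ u.1) / e2norm u.1) := by
      refine ⟨Real.sqrt (∑ i, ∑ j, X i j ^ 2), ?_⟩
      rintro _ ⟨v, rfl⟩
      exact div_le_of_le_mul₀ (e2norm_nonneg' _) (Real.sqrt_nonneg _) (key v.1)
    exact le_ciSup hb ⟨u, hu⟩

lemma blockCoh_nonneg {m L d : ℕ} (A : Matrix (Fin m) (Fin L × Fin d) ℝ) : 0 ≤ blockCoh A :=
  Real.iSup_nonneg fun _ => mul_nonneg (by positivity) (specNorm_nonneg _)

lemma specNorm_le_blockCoh {m L d : ℕ} (hd : 0 < d) (A : Matrix (Fin m) (Fin L × Fin d) ℝ)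
    (i j : Fin L) (h : i ≠ j) : specNorm (bgram A i j) ≤ d * blockCoh A := by
  have h1 : (1 / (d : ℝ)) * specNorm (bgram A i j) ≤ blockCoh A :=
    le_ciSup (f := fun p : {p : Fin L × Fin L // p.1 ≠ p.2} =>
      (1 / (d : ℝ)) * specNorm (bgram A p.1.1 p.1.2)) (Set.finite_range _).bddAbove ⟨(i, j), h⟩
  have hd' : (0 : ℝ) < d := by exact_mod_cast hd
  rw [one_div, inv_mul_le_iff₀ hd'] at h1
  exact h1

lemma le_subCoh {m L d : ℕ} (A : Matrix (Fin m) (Fin L × Fin d) ℝ)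
    (l : Fin L) (i j : Fin d) (h : i ≠ j) : |bgram A l l i j| ≤ subCoh A :=
  le_ciSup (f := fun t : {t : Fin L × Fin d × Fin d // t.2.1 ≠ t.2.2} =>
    |dotp (acol A t.1.1 t.1.2.1) (acol A t.1.1 t.1.2.2)|)
    (Set.finite_range _).bddAbove ⟨(l, i, j), h⟩

lemma diag_bound {m L d : ℕ} (A : Matrix (Fin m) (Fin L × Fin d) ℝ)
    (hA : ∀ l j, e2norm (acol A l j) = 1) (l : Fin L) (x : Fin d → ℝ) :
    (1 - ((d : ℝ) - 1) * subCoh A) * e2norm x ^ 2 ≤ dotp x (bgram A l l *ᵥ x) := by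
  have h1 : ∀ i j, -subCoh A * (x i ^ 2 + x j ^ 2) / 2
      + (if i = j then (1 + subCoh A) * x i ^ 2 else 0) ≤ x i * (bgram A l l i j * x j) := by
    intro i j
    by_cases h : i = j
    · subst h
      have : bgram A l l i i = 1 := by
        have h2 := e2norm_sq' (acol A l i)
        rw [hA] at h2
        simp only [bgram, dotp]
        simp only [← sq]
        linarith
      rw [this, if_pos rfl]
      apply le_of_eq
      ring
    · rw [if_neg h, add_zero]
      have h2 := abs_le.1 (le_subCoh A l i j h)
      nlinarith [mul_nonneg (by linarith [h2.1] : 0 ≤ subCoh A + bgram A l l i j)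
          (sq_nonneg (x i + x j)),
        mul_nonneg (by linarith [h2.2] : 0 ≤ subCoh A - bgram A l l i j)
          (sq_nonneg (x i - x j))]
  calc _ = ∑ i, ∑ j, (-subCoh A * (x i ^ 2 + x j ^ 2) / 2
      + (if i = j then (1 + subCoh A) * x i ^ 2 else 0)) := by
        simp only [Finset.sum_add_distrib, Finset.sum_ite_eq, Finset.mem_univ, if_true,
          ← Finset.sum_div, ← Finset.mul_sum, Finset.sum_const, Finset.card_univ,
          Fintype.card_fin, nsmul_eq_mul, ← e2norm_sq']
        ring
    _ ≤ ∑ i, ∑ j, x i * (bgram A l l i j * x j) :=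
        Finset.sum_le_sum fun i _ => Finset.sum_le_sum fun j _ => h1 i j
    _ = _ := by
        simp only [dotp, Matrix.mulVec, dotProduct, Finset.mul_sum]

/-- **Linear independence of concatenated blocks.**  If `1 - (d-1)ν - (K-1)dμ_B > 0`, then
for any `K` distinct block indices `l 0, …, l (K-1)`, the concatenated matrix
`[A_{l 0} … A_{l (K-1)}]` has linearly independent columns. -/
theorem stmt17 {m L d K : ℕ}
    (hm : m < L * d) (hd : 0 < d)
    (A : Matrix (Fin m) (Fin L × Fin d) ℝ)
    (hA : ∀ l j, e2norm (acol A l j) = 1)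
    (μB ν : ℝ) (hμB : μB = blockCoh A) (hν : ν = subCoh A)
    (hcond : 0 < 1 - ((d : ℝ) - 1) * ν - ((K : ℝ) - 1) * d * μB)
    (l : Fin K → Fin L) (hl : Function.Injective l) :
    LinearIndependent ℝ (fun c : Fin K × Fin d => fun i => A i (l c.1, c.2)) := by
  subst hμB hν
  rw [Fintype.linearIndependent_iff]
  intro g hg
  rintro ⟨k0, j0⟩
  haveI : Nonempty (Fin K) := ⟨k0⟩
  obtain ⟨k, hk⟩ := Finite.exists_max fun k : Fin K => e2norm fun j => g (k, j)
  set x : Fin K → Fin d → ℝ := fun k j => g (k, j) with hx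
  have hk' : ∀ k', e2norm (x k') ≤ e2norm (x k) := hk
  have hg' : ∀ i, ∑ k', ∑ j, x k' j * A i (l k', j) = 0 := by
    intro i
    have := congrFun hg i
    rw [Fintype.sum_prod_type] at this
    simpa using this
  have hzero : ∑ k', dotp (x k) (bgram A (l k) (l k') *ᵥ x k') = 0 := by
    calc _ = ∑ j, x k j * ∑ i, A i (l k, j) * ∑ k', ∑ j', x k' j' * A i (l k', j') := by
          simp only [dotp, bgram, acol, Matrix.mulVec, dotProduct, Finset.mul_sum, Finset.sum_mul]
          rw [Finset.sum_comm]
          refine Finset.sum_congr rfl fun j _ => ?_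
          conv_rhs => rw [Finset.sum_comm]
          refine Finset.sum_congr rfl fun k' _ => ?_
          conv_rhs => rw [Finset.sum_comm]
          refine Finset.sum_congr rfl fun j' _ => ?_
          refine Finset.sum_congr rfl fun i _ => ?_
          ring
      _ = 0 := by simp [hg']
  have hterm : ∀ k', -(d * blockCoh A) * e2norm (x k) ^ 2 +
      (if k = k' then (1 - ((d : ℝ) - 1) * subCoh A + d * blockCoh A) * e2norm (x k) ^ 2 else 0)
      ≤ dotp (x k) (bgram A (l k) (l k') *ᵥ x k') := by
    intro k'
    by_cases h : k = k'
    · subst h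
      rw [if_pos rfl]
      have := diag_bound A hA (l k) (x k)
      linarith
    · rw [if_neg h, add_zero]
      have h1 := (abs_le.1 (abs_dotp_le (x k) (bgram A (l k) (l k') *ᵥ x k'))).1
      have h2 := specNorm_le (bgram A (l k) (l k')) (x k')
      have h3 := specNorm_le_blockCoh hd A (l k) (l k') (fun e => h (hl e))
      have h4 : e2norm (bgram A (l k) (l k') *ᵥ x k') ≤ d * blockCoh A * e2norm (x k) :=
        h2.trans (mul_le_mul h3 (hk' k') (e2norm_nonneg' _)
          (mul_nonneg (Nat.cast_nonneg d) (blockCoh_nonneg A)))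
      have h5 := mul_le_mul_of_nonneg_left h4 (e2norm_nonneg' (x k))
      linarith
  have hsum := Finset.sum_le_sum fun k' (_ : k' ∈ Finset.univ) => hterm k'
  rw [hzero] at hsum
  simp only [Finset.sum_add_distrib, Finset.sum_ite_eq, Finset.mem_univ, if_true,
    Finset.sum_const, Finset.card_univ, Fintype.card_fin, nsmul_eq_mul] at hsum
  have hM : e2norm (x k) = 0 := by
    by_contra hne
    have hp : 0 < e2norm (x k) ^ 2 := by positivity
    have := mul_pos hcond hp
    linarith
  have h0 : e2norm (x k0) = 0 := le_antisymm (hM ▸ hk' k0) (e2norm_nonneg' _)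
  exact congrFun (e2norm_zero' _ h0) j0
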